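/- Let π = 1 + e₁ + e₂, so that N(π) = 3, and let n ≥ 1 and 1 ≤ k ≤ n. If C is an additive subgroup of H(ℤ)_{1+e₁+e₂}^n of cardinality 9^k (an (n,k) linear code) that corrects all errors of Lipschitz weight 2 or less, then 9^{n−k} ≥ 32n² − 24n + 1. -/

import Mathlib

open Quaternion

/-- The set `{δ * π : δ ∈ H(ℤ)}`, as an additive subgroup of the Lipschitz
integers `ℍ[ℤ]`.  Two Lipschitz integers are right congruent modulo `π` iff
their difference lies in this subgroup. -/
def lipMultiples (π : ℍ[ℤ]) : AddSubgroup ℍ[ℤ] where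
  carrier := Set.range (fun δ => δ * π)
  zero_mem' := ⟨0, zero_mul π⟩
  add_mem' := by rintro _ _ ⟨a, rfl⟩ ⟨b, rfl⟩; exact ⟨a + b, add_mul a b π⟩
  neg_mem' := by rintro _ ⟨a, rfl⟩; exact ⟨-a, neg_mul a π⟩

/-- `H(ℤ)_π`: the Lipschitz integers modulo right congruence modulo `π`. -/
abbrev LipMod (π : ℍ[ℤ]) := ℍ[ℤ] ⧸ lipMultiples π

/-- The Lipschitz weight of a class `x ∈ H(ℤ)_π`: the least value of
`|a₀| + |a₁| + |a₂| + |a₃|` over all representatives `a₀ + a₁e₁ + a₂e₂ + a₃e₃` of `x`. -/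
noncomputable def lipWt (π : ℍ[ℤ]) (x : LipMod π) : ℕ :=
  sInf {m | ∃ q : ℍ[ℤ], (QuotientAddGroup.mk q : LipMod π) = x ∧
    m = q.re.natAbs + q.imI.natAbs + q.imJ.natAbs + q.imK.natAbs}

/-- The Lipschitz weight of a vector over `H(ℤ)_π` is the sum of the Lipschitz
weights of its components. -/
noncomputable def lipWtVec (π : ℍ[ℤ]) {n : ℕ} (v : Fin n → LipMod π) : ℕ :=
  ∑ i, lipWt π (v i)

/-- A code `C ⊆ H(ℤ)_π^n` corrects all errors of Lipschitz weight `t` or less: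
any two distinct vectors of Lipschitz weight at most `t` lie in distinct cosets of `C`. -/
def CorrectsLip (π : ℍ[ℤ]) {n : ℕ} (C : AddSubgroup (Fin n → LipMod π)) (t : ℕ) : Prop :=
  ∀ u v : Fin n → LipMod π, lipWtVec π u ≤ t → lipWtVec π v ≤ t → u - v ∈ C → u = v

/-!
Right multiplication by `π` has determinant `N(π)²` on the rank-four lattice of Lipschitz integers,
so `H(ℤ)_π` has `N(π)²` elements. Suppose `N(π) = 3`. Two distinct elements among `0` and the eight
units differ by a quaternion of norm `1`, `2` or `4`, whereas every multiple of `π` has norm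
divisible by `3`. These nine elements are therefore pairwise incongruent and represent all nine
classes, so every class has weight at most one and a vector has weight at most its Hamming weight.
A code correcting two errors thus separates the Hamming ball of radius two, which has
`1 + 8n + 64 * n.choose 2` elements.
-/

section HammingCount

open Finset

variable {ι : Type*} [Fintype ι] [DecidableEq ι]

theorem card_filter_support_eq {β : ι → Type*} [∀ i, Fintype (β i)] [∀ i, DecidableEq (β i)]
    [∀ i, Zero (β i)] (s : Finset ι) :
    #{v : ∀ i, β i | ({i | v i ≠ 0} : Finset ι) = s} = ∏ i ∈ s, (Fintype.card (β i) - 1) := by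
  have hpi : ({v : ∀ i, β i | ({i | v i ≠ 0} : Finset ι) = s} : Finset (∀ i, β i)) =
      Fintype.piFinset fun i => if i ∈ s then ({0} : Finset (β i))ᶜ else {0} := by
    ext v
    simp only [mem_filter_univ, Finset.ext_iff, Fintype.mem_piFinset]
    refine forall_congr' fun i => ?_
    by_cases hi : i ∈ s <;> simp [hi]
  have hcard (i : ι) : #(if i ∈ s then ({0} : Finset (β i))ᶜ else {0}) =
      if i ∈ s then Fintype.card (β i) - 1 else 1 := by
    split_ifs <;> simp [card_compl]
  simp only [hpi, Fintype.card_piFinset, hcard, Fintype.prod_ite_mem]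

variable {α : Type*} [Fintype α] [DecidableEq α] [Zero α]

theorem card_filter_hammingNorm_eq (j : ℕ) :
    #{v : ι → α | hammingNorm v = j} =
      (Fintype.card ι).choose j * (Fintype.card α - 1) ^ j := by
  have hmaps : ∀ v ∈ ({v : ι → α | hammingNorm v = j} : Finset (ι → α)),
      ({i | v i ≠ 0} : Finset ι) ∈ powersetCard j univ := by
    simp [hammingNorm, mem_powersetCard]
  have hfiber : ∀ s ∈ powersetCard j (univ : Finset ι),
      #{v ∈ ({v : ι → α | hammingNorm v = j} : Finset (ι → α)) |
        ({i | v i ≠ 0} : Finset ι) = s} = (Fintype.card α - 1) ^ j := by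
    intro s hs
    obtain rfl : #s = j := (mem_powersetCard.1 hs).2
    have hsub : ∀ v : ι → α, ({i | v i ≠ 0} : Finset ι) = s → hammingNorm v = #s := by
      rintro v rfl
      rfl
    rw [filter_filter, filter_congr fun v _ => and_iff_right_of_imp (hsub v),
      card_filter_support_eq, prod_const]
  rw [card_eq_sum_card_fiberwise hmaps, sum_congr rfl hfiber, sum_const, card_powersetCard,
    card_univ, smul_eq_mul]

theorem card_filter_hammingNorm_le (t : ℕ) :
    #{v : ι → α | hammingNorm v ≤ t} =
      ∑ j ∈ range (t + 1), (Fintype.card ι).choose j * (Fintype.card α - 1) ^ j := by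
  have hmaps : ∀ v ∈ ({v : ι → α | hammingNorm v ≤ t} : Finset (ι → α)),
      hammingNorm v ∈ range (t + 1) := by
    simp
  rw [card_eq_sum_card_fiberwise hmaps]
  refine sum_congr rfl fun j hj => ?_
  have hle : ∀ v : ι → α, hammingNorm v = j → hammingNorm v ≤ t := by
    rintro v rfl
    exact Nat.lt_succ_iff.1 (mem_range.1 hj)
  rw [filter_filter, filter_congr fun v _ => and_iff_right_of_imp (hle v),
    card_filter_hammingNorm_eq]

end HammingCount

theorem sum_choose_mul_eight_pow_range_three (n : ℕ) :
    ∑ j ∈ Finset.range 3, n.choose j * 8 ^ j = 32 * n ^ 2 - 24 * n + 1 := by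
  cases n with
  | zero => rfl
  | succ m =>
    have hchoose : (m + 1) * m = (m + 1).choose 2 * 2 := by
      simpa using Nat.add_one_mul_choose_eq m 1
    simp only [Finset.sum_range_succ, Finset.sum_range_zero, Nat.choose_zero_right,
      Nat.choose_one_right]
    lia

theorem index_eq_pow_sub_of_card_eq_pow {G : Type*} [AddGroup G] (C : AddSubgroup G) {q n k : ℕ}
    (hq : 1 < q) (hG : Nat.card G = q ^ n) (hC : Nat.card C = q ^ k) : C.index = q ^ (n - k) := by
  have hmul : q ^ k * C.index = q ^ n := by rw [← hC, ← hG, C.card_mul_index]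
  have hkn : k ≤ n := (Nat.pow_dvd_pow_iff_le_right hq).1 ⟨_, hmul.symm⟩
  refine Nat.eq_of_mul_eq_mul_left (Nat.pow_pos (n := k) (zero_lt_one.trans hq)) ?_
  rw [hmul, pow_mul_pow_sub q hkn]

theorem det_mulRight_quaternionAlgebra {R : Type*} [CommRing R] {c₁ c₂ c₃ : R}
    (q : ℍ[R,c₁,c₂,c₃]) : LinearMap.det (LinearMap.mulRight R q) = (q * star q).re ^ 2 := by
  let b := QuaternionAlgebra.basisOneIJK c₁ c₂ c₃
  have hmatrix : LinearMap.toMatrix b b (LinearMap.mulRight R q) =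
      !![q.re, c₁ * q.imI, c₃ * q.imJ + c₂ * c₃ * q.imK, -(c₁ * c₃ * q.imK);
         q.imI, q.re + c₂ * q.imI, -(c₃ * q.imK), c₃ * q.imJ;
         q.imJ, c₁ * q.imK, q.re + c₂ * q.imI, -(c₁ * q.imI);
         q.imK, q.imJ + c₂ * q.imK, -q.imI, q.re] := by
    ext i j
    fin_cases i <;> fin_cases j <;>
      simp [b, QuaternionAlgebra.basisOneIJK, LinearMap.toMatrix_apply]
  rw [← LinearMap.det_toMatrix b, hmatrix]
  simp [Matrix.det_succ_row_zero, Fin.sum_univ_succ, Fin.succAbove]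
  ring

theorem det_mulRight_quaternion {R : Type*} [CommRing R] (q : ℍ[R]) :
    LinearMap.det (LinearMap.mulRight R q) = normSq q ^ 2 :=
  det_mulRight_quaternionAlgebra (c₁ := -1) (c₂ := 0) (c₃ := -1) q

section LipMod

variable {π : ℍ[ℤ]}

theorem card_lipMod (hπ : π ≠ 0) : (Nat.card (LipMod π) : ℤ) = normSq π ^ 2 := by
  let N := LinearMap.range (LinearMap.mulRight ℤ π)
  let e : ℍ[ℤ] ≃ₗ[ℤ] N := LinearEquiv.ofInjective _ (mul_left_injective₀ hπ)
  calc (Nat.card (LipMod π) : ℤ)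
      = (LinearMap.det (LinearMap.mulRight ℤ π)).natAbs :=
        congrArg Nat.cast (Submodule.natAbs_det_equiv N e).symm
    _ = normSq π ^ 2 := by
        rw [det_mulRight_quaternion, Int.natAbs_of_nonneg (sq_nonneg _)]

theorem normSq_dvd_normSq_sub_of_mk_eq {a b : ℍ[ℤ]}
    (h : (QuotientAddGroup.mk a : LipMod π) = QuotientAddGroup.mk b) :
    normSq π ∣ normSq (b - a) := by
  rw [QuotientAddGroup.eq, neg_add_eq_sub] at h
  obtain ⟨δ, hδ⟩ := h
  rw [← hδ, map_mul]
  exact dvd_mul_left _ _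

theorem lipWt_mk_le (π q : ℍ[ℤ]) :
    lipWt π (QuotientAddGroup.mk q) ≤
      q.re.natAbs + q.imI.natAbs + q.imJ.natAbs + q.imK.natAbs :=
  Nat.sInf_le ⟨q, rfl, rfl⟩

theorem lipWt_zero (π : ℍ[ℤ]) : lipWt π 0 = 0 :=
  Nat.le_zero.1 (lipWt_mk_le π 0)

theorem lipWtVec_le_mul_hammingNorm [DecidableEq (LipMod π)] {m n : ℕ}
    (hwt : ∀ x, lipWt π x ≤ m) (v : Fin n → LipMod π) :
    lipWtVec π v ≤ m * hammingNorm v := by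
  calc lipWtVec π v
      ≤ ∑ i, if v i ≠ 0 then m else 0 := by
        refine Finset.sum_le_sum fun i _ => ?_
        split_ifs with hi
        · exact hwt (v i)
        · rw [not_not.1 hi, lipWt_zero]
    _ = m * hammingNorm v := by
        rw [← Finset.sum_filter, Finset.sum_const, smul_eq_mul, mul_comm, hammingNorm]

end LipMod

section Norm3

/-- The quaternion `0` followed by the eight units of the Lipschitz integers, that is, all Lipschitz
integers with `|a₀| + |a₁| + |a₂| + |a₃| ≤ 1`. They are enumerated by `Fin 9` so that their
pairwise differences can be checked by evaluation. -/
def zeroOrUnit : Fin 9 → ℍ[ℤ] :=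
  ![0, ⟨1, 0, 0, 0⟩, ⟨-1, 0, 0, 0⟩, ⟨0, 1, 0, 0⟩, ⟨0, -1, 0, 0⟩,
    ⟨0, 0, 1, 0⟩, ⟨0, 0, -1, 0⟩, ⟨0, 0, 0, 1⟩, ⟨0, 0, 0, -1⟩]

theorem eq_of_three_dvd_normSq_zeroOrUnit_sub :
    ∀ a b : Fin 9, 3 ∣ normSq (zeroOrUnit b - zeroOrUnit a) → a = b := by
  decide

theorem natAbs_zeroOrUnit_le_one :
    ∀ a : Fin 9, (zeroOrUnit a).re.natAbs + (zeroOrUnit a).imI.natAbs +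
      (zeroOrUnit a).imJ.natAbs + (zeroOrUnit a).imK.natAbs ≤ 1 := by
  decide

variable {π : ℍ[ℤ]}

theorem card_lipMod_of_normSq_eq_three (hπ : normSq π = 3) : Nat.card (LipMod π) = 9 := by
  have hne : π ≠ 0 := normSq_ne_zero.1 (by simp [hπ])
  have hcard : (Nat.card (LipMod π) : ℤ) = 9 := by rw [card_lipMod hne, hπ]; norm_num
  exact_mod_cast hcard

theorem mk_zeroOrUnit_surjective (hπ : normSq π = 3) :
    Function.Surjective fun a => (QuotientAddGroup.mk (zeroOrUnit a) : LipMod π) := by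
  have hinj : Function.Injective
      fun a => (QuotientAddGroup.mk (zeroOrUnit a) : LipMod π) := fun a b hab =>
    eq_of_three_dvd_normSq_zeroOrUnit_sub a b (hπ ▸ normSq_dvd_normSq_sub_of_mk_eq hab)
  have hcard := card_lipMod_of_normSq_eq_three hπ
  have : Finite (LipMod π) := Nat.finite_of_card_ne_zero (by simp [hcard])
  exact (hinj.bijective_of_nat_card_le (by simp [hcard])).2

theorem lipWt_le_one (hπ : normSq π = 3) (x : LipMod π) : lipWt π x ≤ 1 := by
  obtain ⟨a, rfl⟩ := mk_zeroOrUnit_surjective hπ x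
  exact (lipWt_mk_le π _).trans (natAbs_zeroOrUnit_le_one a)

end Norm3

namespace CorrectsLip

variable {π : ℍ[ℤ]} {n t : ℕ} {C : AddSubgroup (Fin n → LipMod π)}

theorem card_le_index [C.FiniteIndex] (hC : CorrectsLip π C t) (S : Finset (Fin n → LipMod π))
    (hS : ∀ v ∈ S, lipWtVec π v ≤ t) : S.card ≤ C.index := by
  have hinj : Function.Injective
      fun v : S => (QuotientAddGroup.mk v.1 : (Fin n → LipMod π) ⧸ C) := by
    intro u v huv
    refine Subtype.ext (hC _ _ (hS v v.2) (hS u u.2) ?_).symm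
    rwa [QuotientAddGroup.eq, neg_add_eq_sub] at huv
  rw [← Nat.card_eq_finsetCard]
  exact Nat.card_le_card_of_injective _ hinj

theorem sum_choose_mul_le_index [Finite (LipMod π)] {m : ℕ} (hwt : ∀ x, lipWt π x ≤ m)
    (hC : CorrectsLip π C (m * t)) :
    ∑ j ∈ Finset.range (t + 1), n.choose j * (Nat.card (LipMod π) - 1) ^ j ≤ C.index := by
  classical
  have := Fintype.ofFinite (LipMod π)
  have hball : ∀ v ∈ ({v | hammingNorm v ≤ t} : Finset (Fin n → LipMod π)),
      lipWtVec π v ≤ m * t := fun v hv =>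
    (lipWtVec_le_mul_hammingNorm hwt v).trans
      (Nat.mul_le_mul_left m ((Finset.mem_filter_univ v).1 hv))
  simpa [card_filter_hammingNorm_le] using hC.card_le_index _ hball

end CorrectsLip

theorem sphere_packing_lipschitz_wt_two_1e1e2_general {π : ℍ[ℤ]} (hπ : normSq π = 3) (n k : ℕ)
    (C : AddSubgroup (Fin n → LipMod π)) (hcard : Nat.card C = 9 ^ k)
    (hcorr : CorrectsLip π C 2) : 32 * n ^ 2 - 24 * n + 1 ≤ 9 ^ (n - k) := by
  have hmod : Nat.card (LipMod π) = 9 := card_lipMod_of_normSq_eq_three hπ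
  have : Finite (LipMod π) := Nat.finite_of_card_ne_zero (by simp [hmod])
  have hspace : Nat.card (Fin n → LipMod π) = 9 ^ n := by
    rw [Nat.card_fun, hmod, Nat.card_fin]
  calc 32 * n ^ 2 - 24 * n + 1
      = ∑ j ∈ Finset.range 3, n.choose j * (Nat.card (LipMod π) - 1) ^ j := by
        rw [hmod, sum_choose_mul_eight_pow_range_three]
    _ ≤ C.index := hcorr.sum_choose_mul_le_index (m := 1) (lipWt_le_one hπ)
    _ = 9 ^ (n - k) := index_eq_pow_sub_of_card_eq_pow C (by norm_num) hspace hcard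

/-- An `(n, k)` linear code over `H(ℤ)_{1+e₁+e₂}` (so `N(π) = 3`) correcting all
errors of Lipschitz weight 2 or less satisfies `9^(n-k) ≥ 32n² - 24n + 1`. -/
theorem sphere_packing_lipschitz_wt_two_1e1e2
    (n k : ℕ) (hn : 1 ≤ n) (hk : 1 ≤ k) (hkn : k ≤ n)
    (C : AddSubgroup (Fin n → LipMod (⟨1, 1, 1, 0⟩ : ℍ[ℤ])))
    (hcard : Nat.card C = 9 ^ k)
    (hcorr : CorrectsLip (⟨1, 1, 1, 0⟩ : ℍ[ℤ]) C 2) :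
    32 * n ^ 2 - 24 * n + 1 ≤ 9 ^ (n - k) :=
  sphere_packing_lipschitz_wt_two_1e1e2_general (by decide) n k C hcard hcorr
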